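/- arXiv:0707.1589 — 2 statements merged into one kernel-verified Lean document; each statement's English description precedes it below -/
import Mathlib

section
/- Let d ≥ 1 be an integer, p > 1 a real number, and let U : ℝ^d → ℝ be a positive Schwartz function satisfying ΔU + U^p − U = 0 pointwise on ℝ^d. Then d(p−1) ∫_{ℝ^d} U² dx = (p(2−d) + 2 + d) ∫_{ℝ^d} |∇U|² dx; equivalently, if ∫|∇U|² ≠ 0 then ∫U² / ∫|∇U|² = (p(2−d)+2+d)/(d(p−1)). -/
open MeasureTheory Real Filter Topology Asymptotics

/-- Partial derivative of `f` in the `j`-th coordinate direction. -/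
noncomputable def pd {d : ℕ} {E : Type*} [NormedAddCommGroup E] [NormedSpace ℝ E]
    (f : EuclideanSpace ℝ (Fin d) → E) (j : Fin d) (x : EuclideanSpace ℝ (Fin d)) : E :=
  fderiv ℝ f x (EuclideanSpace.single j 1)

/-- Euclidean Laplacian: sum of second partial derivatives. -/
noncomputable def lap {d : ℕ} {E : Type*} [NormedAddCommGroup E] [NormedSpace ℝ E]
    (f : EuclideanSpace ℝ (Fin d) → E) (x : EuclideanSpace ℝ (Fin d)) : E :=
  ∑ j, pd (pd f j) j x

namespace SchwartzMap

open scoped LineDeriv SchwartzMap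

variable {D : Type*} [NormedAddCommGroup D] [NormedSpace ℝ D]

theorem lineDerivOp_comm (f : 𝓢(D, ℝ)) (v w : D) : ∂_{v} (∂_{w} f) = ∂_{w} (∂_{v} f) := by
  ext x
  have hf : DifferentiableAt ℝ (fderiv ℝ f) x := (fderivCLM ℝ D ℝ f).differentiableAt
  have expand (a b : D) : ∂_{a} (∂_{b} f) x = fderiv ℝ (fderiv ℝ f) x a b := by
    change fderiv ℝ (fun y => fderiv ℝ f y b) x a = _
    rw [fderiv_clm_apply hf (differentiableAt_const b)]
    simp
  rw [expand, expand]
  exact ((f.smooth 2).contDiffAt.isSymmSndFDerivAt (by simp)).eq v w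

/-- Multiplication of a Schwartz function by a continuous linear functional. -/
noncomputable def clmMul (ℓ : D →L[ℝ] ℝ) (f : 𝓢(D, ℝ)) : 𝓢(D, ℝ) :=
  smulLeftCLM ℝ ℓ f

theorem clmMul_apply (ℓ : D →L[ℝ] ℝ) (f : 𝓢(D, ℝ)) (x : D) : clmMul ℓ f x = ℓ x * f x := by
  simp [clmMul, smulLeftCLM_apply_apply ℓ.hasTemperateGrowth]

theorem lineDerivOp_clmMul_apply (ℓ : D →L[ℝ] ℝ) (f : 𝓢(D, ℝ)) (v x : D) :
    ∂_{v} (clmMul ℓ f) x = ℓ x * ∂_{v} f x + ℓ v * f x := by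
  have h : ⇑(clmMul ℓ f) = fun y => ℓ y * f y := funext (clmMul_apply ℓ f)
  rw [lineDerivOp_apply_eq_fderiv, lineDerivOp_apply_eq_fderiv, h,
    fderiv_fun_mul ℓ.differentiableAt f.differentiableAt]
  simp [mul_comm]

variable [MeasurableSpace D] [BorelSpace D] [FiniteDimensional ℝ D]
  {μ : Measure D} [μ.IsAddHaarMeasure]

theorem integrable_mul (f g : 𝓢(D, ℝ)) : Integrable (fun x => f x * g x) μ :=
  (pairing (ContinuousLinearMap.mul ℝ ℝ) f g).integrable

theorem integrable_clm_mul_mul (ℓ : D →L[ℝ] ℝ) (f g : 𝓢(D, ℝ)) :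
    Integrable (fun x => ℓ x * f x * g x) μ := by
  simpa only [clmMul_apply] using integrable_mul (μ := μ) (clmMul ℓ f) g

/-- Integration by parts against a linear weight. -/
theorem integral_clm_mul_mul_lineDerivOp (ℓ : D →L[ℝ] ℝ) (f g : 𝓢(D, ℝ)) (v : D) :
    ∫ x, ℓ x * f x * ∂_{v} g x ∂μ =
      -(∫ x, ℓ x * ∂_{v} f x * g x ∂μ) - ℓ v * ∫ x, f x * g x ∂μ := by
  have h := integral_mul_lineDerivOp_right_eq_neg_left (μ := μ) (clmMul ℓ f) g v
  simp only [clmMul_apply, lineDerivOp_clmMul_apply, add_mul, mul_assoc (ℓ v)] at h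
  rw [integral_add (integrable_clm_mul_mul ℓ _ g) ((integrable_mul f g).const_mul _),
    integral_const_mul] at h
  linarith

theorem integral_clm_mul_lineDerivOp_mul_self (ℓ : D →L[ℝ] ℝ) (f : 𝓢(D, ℝ)) (v : D) :
    ∫ x, ℓ x * ∂_{v} f x * f x ∂μ = -(ℓ v / 2) * ∫ x, f x ^ 2 ∂μ := by
  have h := integral_clm_mul_mul_lineDerivOp (μ := μ) ℓ f f v
  simp only [mul_right_comm _ (f _), ← pow_two] at h
  linarith

theorem integral_clm_mul_lineDerivOp_mul_lineDerivOp_lineDerivOp (ℓ : D →L[ℝ] ℝ) (f : 𝓢(D, ℝ))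
    (v w : D) :
    ∫ x, ℓ x * ∂_{v} f x * ∂_{w} (∂_{w} f) x ∂μ =
      ℓ v / 2 * ∫ x, ∂_{w} f x ^ 2 ∂μ - ℓ w * ∫ x, ∂_{v} f x * ∂_{w} f x ∂μ := by
  rw [integral_clm_mul_mul_lineDerivOp, lineDerivOp_comm f w v,
    integral_clm_mul_lineDerivOp_mul_self]
  ring

/-- If `g` is the power `f ^ p` of a positive Schwartz function, then
`(p + 1) ∫ ℓ (∂ᵥ f) g = -ℓ(v) ∫ f g`. -/
theorem integral_clm_mul_lineDerivOp_mul_rpow (ℓ : D →L[ℝ] ℝ) {f g : 𝓢(D, ℝ)} {p : ℝ}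
    (hf : ∀ x, 0 < f x) (hg : ∀ x, g x = f x ^ p) (v : D) :
    (p + 1) * ∫ x, ℓ x * ∂_{v} f x * g x ∂μ = -ℓ v * ∫ x, f x * g x ∂μ := by
  have hderiv (x : D) : f x * ∂_{v} g x = p * (∂_{v} f x * g x) := by
    rw [lineDerivOp_apply_eq_fderiv, lineDerivOp_apply_eq_fderiv, show ⇑g = _ from funext hg,
      ((f.hasFDerivAt x).rpow_const (Or.inl (hf x).ne')).fderiv]
    simp only [smul_apply, smul_eq_mul]
    rw [Real.rpow_sub_one (hf x).ne']
    field_simp [(hf x).ne']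
  have h := integral_clm_mul_mul_lineDerivOp (μ := μ) ℓ f g v
  simp only [mul_assoc, hderiv, mul_left_comm (ℓ _) p] at h ⊢
  rw [integral_const_mul] at h
  linarith

end SchwartzMap

open scoped LineDeriv in
open SchwartzMap in
/-- Pohozaev-identity consequence
`d(p−1) ∫U² = (p(2−d)+2+d) ∫|∇U|²` for Schwartz ground states. -/
theorem pohozaev_ratio (d : ℕ) (hd : 1 ≤ d) (p : ℝ) (hp : 1 < p)
    (U : SchwartzMap (EuclideanSpace ℝ (Fin d)) ℝ)
    (hUpos : ∀ x, 0 < U x)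
    (hUeq : ∀ x, lap (⇑U) x + U x ^ p - U x = 0) :
    (d : ℝ) * (p - 1) * ∫ x, (U x) ^ 2
      = (p * (2 - (d : ℝ)) + 2 + (d : ℝ)) * ∫ x, ∑ j, (pd (⇑U) j x) ^ 2 ∧
    ((∫ x, ∑ j, (pd (⇑U) j x) ^ 2) ≠ 0 →
      (∫ x, (U x) ^ 2) / (∫ x, ∑ j, (pd (⇑U) j x) ^ 2)
        = (p * (2 - (d : ℝ)) + 2 + (d : ℝ)) / ((d : ℝ) * (p - 1))) := by
  let e (j : Fin d) : EuclideanSpace ℝ (Fin d) := EuclideanSpace.single j 1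
  let ℓ (i : Fin d) : EuclideanSpace ℝ (Fin d) →L[ℝ] ℝ := EuclideanSpace.proj i
  have hℓe (i j : Fin d) : ℓ i (e j) = if i = j then 1 else 0 := by
    simp [ℓ, e]
  have hpd (j : Fin d) (x) : pd U j x = ∂_{e j} U x := rfl
  let W := U - ∑ j, ∂_{e j} (∂_{e j} U)
  have hW (x) : W x = U x - ∑ j, ∂_{e j} (∂_{e j} U) x := by
    simp [W]
  have hlap (x) : lap U x = ∑ j, ∂_{e j} (∂_{e j} U) x := rfl
  have hWpow (x) : W x = U x ^ p := by
    rw [hW, ← hlap]; linarith [hUeq x]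
  have hsq (f : SchwartzMap (EuclideanSpace ℝ (Fin d)) ℝ) : Integrable (fun x => f x ^ 2) := by
    simpa only [pow_two] using integrable_mul f f
  have hgrad : ∫ x, ∑ j, (pd U j x) ^ 2 = ∑ j, ∫ x, (∂_{e j} U x) ^ 2 := by
    simp only [hpd]
    exact integral_finsetSum _ fun j _ => hsq _
  have energy : ∫ x, U x * W x = (∫ x, U x ^ 2) + ∑ j, ∫ x, (∂_{e j} U x) ^ 2 := by
    simp only [hW, mul_sub, Finset.mul_sum, ← pow_two]
    rw [integral_sub (hsq U) (integrable_finsetSum _ fun j _ => integrable_mul U _),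
      integral_finsetSum _ fun j _ => integrable_mul U _]
    simp only [integral_mul_lineDerivOp_right_eq_neg_left, ← pow_two, Finset.sum_neg_distrib,
      sub_neg_eq_add]
  have dilation (i : Fin d) : ∫ x, ℓ i x * ∂_{e i} U x * W x =
      -(1 / 2) * (∫ x, U x ^ 2) - (1 / 2) * (∑ j, ∫ x, (∂_{e j} U x) ^ 2)
        + ∫ x, (∂_{e i} U x) ^ 2 := by
    simp only [hW, mul_sub, Finset.mul_sum]
    rw [integral_sub (integrable_clm_mul_mul _ _ _)
        (integrable_finsetSum _ fun j _ => integrable_clm_mul_mul _ _ _),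
      integral_finsetSum _ fun j _ => integrable_clm_mul_mul _ _ _]
    simp only [integral_clm_mul_lineDerivOp_mul_self,
      integral_clm_mul_lineDerivOp_mul_lineDerivOp_lineDerivOp, hℓe, Finset.sum_sub_distrib,
      ite_mul, zero_mul, one_mul, Finset.sum_ite_eq, Finset.mem_univ, if_true, ← pow_two]
    ring
  have hsum : ∑ i, (p + 1) * ∫ x, ℓ i x * ∂_{e i} U x * W x = ∑ _i : Fin d, -∫ x, U x * W x :=
    Finset.sum_congr rfl fun i _ => by
      rw [integral_clm_mul_lineDerivOp_mul_rpow (ℓ i) hUpos hWpow, hℓe]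
      simp
  simp only [dilation, energy, ← Finset.mul_sum, Finset.sum_add_distrib, Finset.sum_sub_distrib,
    Finset.sum_const, Finset.card_univ, Fintype.card_fin, nsmul_eq_mul] at hsum
  have key : (d : ℝ) * (p - 1) * ∫ x, (U x) ^ 2
      = (p * (2 - (d : ℝ)) + 2 + (d : ℝ)) * ∫ x, ∑ j, (pd U j x) ^ 2 := by
    rw [hgrad]
    linear_combination -2 * hsum
  refine ⟨key, fun hG => ?_⟩
  have hd0 : (d : ℝ) * (p - 1) ≠ 0 :=
    mul_ne_zero (by exact_mod_cast (by omega : d ≠ 0)) (by linarith)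
  rw [div_eq_div_iff hG hd0]
  linarith
end

section
/- Let d ≥ 1 be an integer, p > 1 a real number, and 1 ≤ m ≤ d. Let v₁, …, v_m be real numbers and V₂(x) := Σ_{j=1}^{m} v_j x_j². Let U : ℝ^d → ℝ be a positive, radially symmetric Schwartz function satisfying ΔU + U^p − U = 0 pointwise, and let g : ℝ^d → ℝ be a Schwartz function satisfying −Δg − p U^{p−1} g + g = −V₂ · U pointwise. Then ∫_{ℝ^d} U g dx = −(1/2) · [ (2p − 6 + dp − d) / (2d(p−1)) ] · (Σ_{j=1}^{m} v_j) · ∫_{ℝ^d} |x|² U² dx. Consequently the power of the narrow lattice soliton U + Ñ² g satisfies ∫(U + Ñ²g)² dx = ∫U² dx − Ñ² [ (2p−6+dp−d)/(2d(p−1)) ∫|x|²U² dx ] Σ_j v_j + Ñ⁴ ∫g² dx. -/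
open MeasureTheory Real Filter Topology Asymptotics

open scoped SchwartzMap LineDeriv Laplacian

/-- Multiplication of a Schwartz function by the `j`-th coordinate. -/
noncomputable def coordMul {d : ℕ} (j : Fin d) :
    𝓢(EuclideanSpace ℝ (Fin d), ℝ) →L[ℝ] 𝓢(EuclideanSpace ℝ (Fin d), ℝ) :=
  SchwartzMap.smulLeftCLM ℝ (EuclideanSpace.proj j : EuclideanSpace ℝ (Fin d) →L[ℝ] ℝ)

/-- The partial derivative of a Schwartz function in the `j`-th coordinate direction. -/
noncomputable def partialDeriv {d : ℕ} (j : Fin d) :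
    𝓢(EuclideanSpace ℝ (Fin d), ℝ) →L[ℝ] 𝓢(EuclideanSpace ℝ (Fin d), ℝ) :=
  LineDeriv.lineDerivOpCLM ℝ _ (EuclideanSpace.single j (1 : ℝ))

/-- The Euler operator `f ↦ x · ∇f` on Schwartz functions. -/
noncomputable def eulerOp {d : ℕ} :
    𝓢(EuclideanSpace ℝ (Fin d), ℝ) →L[ℝ] 𝓢(EuclideanSpace ℝ (Fin d), ℝ) :=
  ∑ j, coordMul j ∘L partialDeriv j

section SchwartzCalculus

variable {d : ℕ} (f g : 𝓢(EuclideanSpace ℝ (Fin d), ℝ))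

lemma coordMul_apply (j : Fin d) (x : EuclideanSpace ℝ (Fin d)) :
    coordMul j f x = x j * f x := by
  rw [coordMul, SchwartzMap.smulLeftCLM_apply_apply (by fun_prop)]
  simp

lemma partialDeriv_apply (j : Fin d) (x : EuclideanSpace ℝ (Fin d)) :
    partialDeriv j f x = fderiv ℝ f x (EuclideanSpace.single j 1) := rfl

lemma eulerOp_apply (x : EuclideanSpace ℝ (Fin d)) :
    eulerOp f x = ∑ j, x j * partialDeriv j f x := by
  simp [eulerOp, sum_apply, coordMul_apply]

lemma lap_coe (x : EuclideanSpace ℝ (Fin d)) : lap f x = (Δ f) x := by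
  rw [SchwartzMap.laplacian_eq_sum (EuclideanSpace.basisFun (Fin d) ℝ)]
  simp only [EuclideanSpace.basisFun_apply, sum_apply]
  rfl

lemma laplacian_eq_sum_partialDeriv : Δ f = ∑ j, partialDeriv j (partialDeriv j f) := by
  rw [SchwartzMap.laplacian_eq_sum (EuclideanSpace.basisFun (Fin d) ℝ)]
  simp only [EuclideanSpace.basisFun_apply]
  rfl

lemma partialDeriv_comm (j k : Fin d) :
    partialDeriv j (partialDeriv k f) = partialDeriv k (partialDeriv j f) := by
  have key : ∀ (i l : Fin d) (x : EuclideanSpace ℝ (Fin d)),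
      partialDeriv i (partialDeriv l f) x = fderiv ℝ (fderiv ℝ f) x
        (EuclideanSpace.single i 1) (EuclideanSpace.single l 1) := by
    intro i l x
    have hd : DifferentiableAt ℝ (fderiv ℝ f) x :=
      (SchwartzMap.fderivCLM ℝ (EuclideanSpace ℝ (Fin d)) ℝ f).differentiableAt
    rw [partialDeriv_apply]
    change fderiv ℝ (fun y => fderiv ℝ f y (EuclideanSpace.single l 1)) x _ = _
    rw [fderiv_clm_apply hd (differentiableAt_const _)]
    simp
  ext x
  rw [key, key]
  exact ((f.smooth 2).contDiffAt.isSymmSndFDerivAt (by simp)) _ _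

lemma partialDeriv_coordMul (j k : Fin d) :
    partialDeriv k (coordMul j f)
      = (if k = j then (1 : ℝ) else 0) • f + coordMul j (partialDeriv k f) := by
  ext x
  have hfun : ⇑(coordMul j f) =
      fun y => (EuclideanSpace.proj j : EuclideanSpace ℝ (Fin d) →L[ℝ] ℝ) y * f y := by
    ext y
    simp [coordMul_apply]
  rw [partialDeriv_apply, hfun,
    fderiv_fun_mul (ContinuousLinearMap.differentiableAt _) f.differentiableAt,
    ContinuousLinearMap.fderiv]
  by_cases h : k = j
  · subst h
    simp [coordMul_apply, partialDeriv_apply, add_comm]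
  · simp [coordMul_apply, partialDeriv_apply, h, Ne.symm h]

lemma laplacian_coordMul (j : Fin d) :
    Δ (coordMul j f) = (2 : ℝ) • partialDeriv j f + coordMul j (Δ f) := by
  simp only [laplacian_eq_sum_partialDeriv, partialDeriv_coordMul, map_add, map_smul, map_sum,
    Finset.sum_add_distrib, two_smul]
  simp only [ite_smul, one_smul, zero_smul, Finset.sum_ite_eq', Finset.mem_univ, if_true]
  abel

lemma laplacian_eulerOp : Δ (eulerOp f) = (2 : ℝ) • Δ f + eulerOp (Δ f) := by
  have hcomm : ∀ j, Δ (partialDeriv j f) = partialDeriv j (Δ f) := by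
    intro j
    simp only [laplacian_eq_sum_partialDeriv, map_sum]
    refine Finset.sum_congr rfl fun k _ => ?_
    rw [partialDeriv_comm f k j, partialDeriv_comm (partialDeriv k f) k j]
  have hsum : Δ (eulerOp f) = ∑ j, Δ (coordMul j (partialDeriv j f)) := by
    simp only [eulerOp, ← SchwartzMap.laplacianCLM_eq', sum_apply, map_sum,
      ContinuousLinearMap.comp_apply]
  rw [hsum]
  simp only [laplacian_coordMul, hcomm, Finset.sum_add_distrib, ← Finset.smul_sum,
    ← laplacian_eq_sum_partialDeriv]
  simp [eulerOp]

lemma SchwartzMap.integrable_mul_s11 : Integrable (fun x => f x * g x) :=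
  (SchwartzMap.pairing (ContinuousLinearMap.mul ℝ ℝ) f g).integrable

lemma integrable_sq_mul_sq (j : Fin d) :
    Integrable fun x : EuclideanSpace ℝ (Fin d) => x j ^ 2 * f x ^ 2 := by
  convert SchwartzMap.integrable_mul_s11 (coordMul j f) (coordMul j f) using 2 with x
  simp only [coordMul_apply]
  ring

/-- The dilation identity `∫ x_j² f (x · ∇f) = -(d + 2)/2 ∫ x_j² f²`. -/
lemma integral_sq_mul_eulerOp (j : Fin d) :
    ∫ x, x j ^ 2 * f x * eulerOp f x = -((d + 2 : ℝ) / 2) * ∫ x, x j ^ 2 * f x ^ 2 := by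
  have hint : ∀ k, Integrable fun x => coordMul k (coordMul j (coordMul j f)) x
      * partialDeriv k f x := fun k => SchwartzMap.integrable_mul_s11 _ _
  have hpart : ∀ k, ∫ x, coordMul k (coordMul j (coordMul j f)) x * partialDeriv k f x
      = -(1 / 2 + if k = j then 1 else 0) * ∫ x, x j ^ 2 * f x ^ 2 := by
    intro k
    have hibp := SchwartzMap.integral_mul_lineDerivOp_right_eq_neg_left (μ := volume)
      (coordMul k (coordMul j (coordMul j f))) f (EuclideanSpace.single k (1 : ℝ))
    change ∫ x, _ * partialDeriv k f x = -∫ x, partialDeriv k _ x * f x at hibp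
    have hpt : ∀ x, partialDeriv k (coordMul k (coordMul j (coordMul j f))) x * f x
        = (1 + 2 * if k = j then 1 else 0) * (x j ^ 2 * f x ^ 2)
          + coordMul k (coordMul j (coordMul j f)) x * partialDeriv k f x := by
      intro x
      by_cases h : k = j
      · subst h
        simp only [partialDeriv_coordMul, map_add, add_apply, if_true, one_smul,
          coordMul_apply]
        ring
      · simp only [partialDeriv_coordMul, map_add, add_apply, if_true, one_smul,
          coordMul_apply, if_neg h, zero_smul, zero_apply]
        ring
    simp only [hpt] at hibp
    rw [integral_add ((integrable_sq_mul_sq f j).const_mul _) (hint k), integral_const_mul] at hibp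
    linear_combination hibp / 2
  have hpt : ∀ x, x j ^ 2 * f x * eulerOp f x
      = ∑ k, coordMul k (coordMul j (coordMul j f)) x * partialDeriv k f x := by
    intro x
    simp only [eulerOp_apply, coordMul_apply, Finset.mul_sum]
    exact Finset.sum_congr rfl fun k _ => by ring
  simp only [hpt]
  rw [integral_finsetSum _ fun k _ => hint k]
  simp only [hpart]
  rw [← Finset.sum_mul, Finset.sum_neg_distrib, Finset.sum_add_distrib]
  simp
  ring

/-- All second coordinate moments of the square of a radial function agree. -/
lemma integral_sq_mul_sq_of_radial {φ : ℝ → ℝ} (hrad : ∀ x, f x = φ ‖x‖) (j : Fin d) :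
    d * ∫ x, x j ^ 2 * f x ^ 2 = ∫ x, ‖x‖ ^ 2 * f x ^ 2 := by
  have hswap : ∀ k, ∫ x : EuclideanSpace ℝ (Fin d), x k ^ 2 * f x ^ 2
      = ∫ x, x j ^ 2 * f x ^ 2 := by
    intro k
    rw [← MeasureTheory.integral_comp
      (LinearIsometryEquiv.piLpCongrLeft 2 ℝ ℝ (Equiv.swap j k)) (fun x => x k ^ 2 * f x ^ 2)]
    refine integral_congr_ae (Eventually.of_forall fun x => ?_)
    simp [hrad, LinearIsometryEquiv.piLpCongrLeft_apply]
  have hpt : ∀ x : EuclideanSpace ℝ (Fin d), ‖x‖ ^ 2 * f x ^ 2 = ∑ k, x k ^ 2 * f x ^ 2 := by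
    intro x
    rw [EuclideanSpace.real_norm_sq_eq, Finset.sum_mul]
  simp only [hpt]
  rw [integral_finsetSum _ fun k _ => integrable_sq_mul_sq f k]
  simp [hswap]

end SchwartzCalculus

/-- The generator of the scaling symmetry is mapped by the linearized operator to `-U`. -/
lemma laplacian_scaling_generator {d : ℕ} {p : ℝ} (hp : 1 < p)
    (U : 𝓢(EuclideanSpace ℝ (Fin d), ℝ)) (hUpos : ∀ x, 0 < U x)
    (hUeq : ∀ x, lap U x + U x ^ p - U x = 0) (x : EuclideanSpace ℝ (Fin d)) :
    (Δ ((p - 1)⁻¹ • U + (2 : ℝ)⁻¹ • eulerOp U)) x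
      = U x + (1 - p * U x ^ (p - 1)) * ((p - 1)⁻¹ • U + (2 : ℝ)⁻¹ • eulerOp U) x := by
  have hlap : ∀ y, (Δ U) y = U y - U y ^ p := by
    intro y
    rw [← lap_coe]
    linear_combination hUeq y
  have hpd : ∀ j, partialDeriv j (Δ U) x = (1 - p * U x ^ (p - 1)) * partialDeriv j U x := by
    intro j
    have hder : HasFDerivAt (⇑(Δ U : 𝓢(EuclideanSpace ℝ (Fin d), ℝ)))
        (fderiv ℝ U x - (p * U x ^ (p - 1)) • fderiv ℝ U x) x := by
      have hfun : ⇑(Δ U : 𝓢(EuclideanSpace ℝ (Fin d), ℝ)) = fun y => U y - U y ^ p := funext hlap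
      rw [hfun]
      exact (U.hasFDerivAt x).sub ((U.hasFDerivAt x).rpow_const (Or.inl (hUpos x).ne'))
    rw [partialDeriv_apply, hder.fderiv, partialDeriv_apply]
    simp
    ring
  have heuler : eulerOp (Δ U) x = (1 - p * U x ^ (p - 1)) * eulerOp U x := by
    simp only [eulerOp_apply, hpd, Finset.mul_sum]
    exact Finset.sum_congr rfl fun j _ => by ring
  have hexp : Δ ((p - 1)⁻¹ • U + (2 : ℝ)⁻¹ • eulerOp U)
      = (p - 1)⁻¹ • Δ U + (2 : ℝ)⁻¹ • Δ (eulerOp U) := by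
    simp only [← SchwartzMap.laplacianCLM_eq', map_add, map_smul]
  have hpow : U x ^ (p - 1) * U x = U x ^ p := by
    rw [← Real.rpow_add_one (hUpos x).ne']
    simp
  have hp1 : p - 1 ≠ 0 := by linarith
  rw [hexp, laplacian_eulerOp]
  simp only [add_apply, smul_apply, smul_eq_mul, hlap, heuler, ← hpow]
  field_simp
  ring

/-- the O(N²) coefficient in the power expansion of a narrow lattice
soliton: `∫Ug = −(1/2) I Σ v_j` with `I = [(2p−6+dp−d)/(2d(p−1))] ∫|x|²U²`, and the
resulting exact expansion of the power of `U + N²g`. -/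
theorem power_expansion_narrow_soliton (d m : ℕ) (hd : 1 ≤ d) (hm : 1 ≤ m)
    (hmd : m ≤ d) (p : ℝ) (hp : 1 < p)
    (v : Fin m → ℝ)
    (U g : SchwartzMap (EuclideanSpace ℝ (Fin d)) ℝ)
    (φ : ℝ → ℝ) (hrad : ∀ x, U x = φ ‖x‖)
    (hUpos : ∀ x, 0 < U x)
    (hUeq : ∀ x, lap (⇑U) x + U x ^ p - U x = 0)
    (hgeq : ∀ x : EuclideanSpace ℝ (Fin d),
      -(lap (⇑g) x) - p * U x ^ (p - 1) * g x + g x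
        = -((∑ j : Fin m, v j * (x (Fin.castLE hmd j)) ^ 2) * U x)) :
    (∫ x : EuclideanSpace ℝ (Fin d), U x * g x
      = -(1 / 2) * ((2 * p - 6 + (d : ℝ) * p - (d : ℝ)) / (2 * (d : ℝ) * (p - 1)))
          * (∑ j : Fin m, v j)
          * ∫ x : EuclideanSpace ℝ (Fin d), ‖x‖ ^ 2 * (U x) ^ 2) ∧
    ∀ N : ℝ,
      ∫ x : EuclideanSpace ℝ (Fin d), (U x + N ^ 2 * g x) ^ 2
        = (∫ x : EuclideanSpace ℝ (Fin d), (U x) ^ 2)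
          - N ^ 2 * (((2 * p - 6 + (d : ℝ) * p - (d : ℝ)) / (2 * (d : ℝ) * (p - 1)))
              * ∫ x : EuclideanSpace ℝ (Fin d), ‖x‖ ^ 2 * (U x) ^ 2)
            * (∑ j : Fin m, v j)
          + N ^ 4 * ∫ x : EuclideanSpace ℝ (Fin d), (g x) ^ 2 := by
  have hp1 : p - 1 ≠ 0 := by linarith
  have hd0 : (d : ℝ) ≠ 0 := by positivity
  have hUg : ∫ x : EuclideanSpace ℝ (Fin d), U x * g x
      = -(1 / 2) * ((2 * p - 6 + (d : ℝ) * p - (d : ℝ)) / (2 * (d : ℝ) * (p - 1)))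
          * (∑ j : Fin m, v j)
          * ∫ x : EuclideanSpace ℝ (Fin d), ‖x‖ ^ 2 * (U x) ^ 2 := by
    set h := (p - 1)⁻¹ • U + (2 : ℝ)⁻¹ • eulerOp U with hh
    have hgreen : ∫ x, h x * (Δ g) x = ∫ x, (Δ h) x * g x :=
      SchwartzMap.integral_mul_laplacian_right_eq_left h g
    have hpt : ∀ x, U x * g x = ((Δ h) x * g x - h x * (Δ g) x)
        + ∑ j : Fin m, v j * ((p - 1)⁻¹ * (x (Fin.castLE hmd j) ^ 2 * U x ^ 2)
          + 2⁻¹ * (x (Fin.castLE hmd j) ^ 2 * U x * eulerOp U x)) := by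
      intro x
      have hV : ∑ j : Fin m, v j * ((p - 1)⁻¹ * (x (Fin.castLE hmd j) ^ 2 * U x ^ 2)
          + 2⁻¹ * (x (Fin.castLE hmd j) ^ 2 * U x * eulerOp U x))
          = (∑ j : Fin m, v j * (x (Fin.castLE hmd j)) ^ 2) * U x * h x := by
        simp only [hh, add_apply, smul_apply, smul_eq_mul, Finset.sum_mul]
        exact Finset.sum_congr rfl fun j _ => by ring
      have hgx := hgeq x
      rw [lap_coe] at hgx
      rw [hV, laplacian_scaling_generator hp U hUpos hUeq x, ← hh]
      linear_combination -h x * hgx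
    have hint₁ : ∀ j : Fin m, Integrable fun x : EuclideanSpace ℝ (Fin d) =>
        (p - 1)⁻¹ * (x (Fin.castLE hmd j) ^ 2 * U x ^ 2) :=
      fun j => (integrable_sq_mul_sq U _).const_mul _
    have hint₂ : ∀ j : Fin m, Integrable fun x : EuclideanSpace ℝ (Fin d) =>
        2⁻¹ * (x (Fin.castLE hmd j) ^ 2 * U x * eulerOp U x) := by
      intro j
      refine Integrable.const_mul ?_ _
      refine (SchwartzMap.integrable_mul_s11 (coordMul (Fin.castLE hmd j) U)
        (coordMul (Fin.castLE hmd j) (eulerOp U))).congr (Eventually.of_forall fun x => ?_)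
      simp only [coordMul_apply]
      ring
    have hint₃ : ∀ j : Fin m, Integrable fun x : EuclideanSpace ℝ (Fin d) =>
        v j * ((p - 1)⁻¹ * (x (Fin.castLE hmd j) ^ 2 * U x ^ 2)
          + 2⁻¹ * (x (Fin.castLE hmd j) ^ 2 * U x * eulerOp U x)) :=
      fun j => ((hint₁ j).add (hint₂ j)).const_mul _
    have hmoment : ∀ j : Fin m, ∫ x : EuclideanSpace ℝ (Fin d),
        v j * ((p - 1)⁻¹ * (x (Fin.castLE hmd j) ^ 2 * U x ^ 2)
          + 2⁻¹ * (x (Fin.castLE hmd j) ^ 2 * U x * eulerOp U x))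
        = v j * (((p - 1)⁻¹ - (d + 2) / 4) / d
          * ∫ x : EuclideanSpace ℝ (Fin d), ‖x‖ ^ 2 * (U x) ^ 2) := by
      intro j
      rw [integral_const_mul, integral_add (hint₁ j) (hint₂ j), integral_const_mul,
        integral_const_mul, integral_sq_mul_eulerOp,
        ← integral_sq_mul_sq_of_radial U hrad (Fin.castLE hmd j)]
      field_simp
      ring
    simp only [hpt]
    have hsub : Integrable fun x => (Δ h) x * g x - h x * (Δ g) x :=
      (SchwartzMap.integrable_mul_s11 _ _).sub (SchwartzMap.integrable_mul_s11 _ _)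
    rw [integral_add hsub (integrable_finsetSum _ fun j _ => hint₃ j),
      integral_sub (SchwartzMap.integrable_mul_s11 _ _) (SchwartzMap.integrable_mul_s11 _ _), hgreen,
      sub_self, zero_add, integral_finsetSum _ fun j _ => hint₃ j]
    simp only [hmoment]
    rw [← Finset.sum_mul]
    field_simp
    ring
  refine ⟨hUg, fun N => ?_⟩
  have hpt : ∀ x, (U x + N ^ 2 * g x) ^ 2
      = U x * U x + 2 * N ^ 2 * (U x * g x) + N ^ 4 * (g x * g x) := fun x => by ring
  simp only [hpt, pow_two (U _), pow_two (g _)]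
  have hadd : Integrable fun x => U x * U x + 2 * N ^ 2 * (U x * g x) :=
    (SchwartzMap.integrable_mul_s11 U U).add ((SchwartzMap.integrable_mul_s11 U g).const_mul _)
  rw [integral_add hadd ((SchwartzMap.integrable_mul_s11 g g).const_mul _),
    integral_add (SchwartzMap.integrable_mul_s11 U U) ((SchwartzMap.integrable_mul_s11 U g).const_mul _),
    integral_const_mul, integral_const_mul, hUg]
  simp only [pow_two (U _)]
  ring
end
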